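/- Let (P_t)_{t≥0} be a Markov semigroup on ℝ^d. Suppose there are a measurable map b : ℝ^d → ℝ^d, a measurable map c from ℝ^d into the symmetric nonnegative-definite d×d real matrices, and a Borel kernel ν(x, dy) of σ-finite measures on ℝ^d with ν(x,{0}) = 0 and ∫ min(1,|y|²) ν(x,dy) < ∞ for every x, such that for every f ∈ C_c^∞(ℝ^d), sup_{x∈ℝ^d} |t^{−1}(P_t f(x) − f(x)) − L f(x)| → 0 as t → 0+, where L f(x) := ⟨b(x), ∇f(x)⟩ + (1/2) Tr(c(x) ∇²f(x)) + ∫_{ℝ^d} (f(x+y) − f(x) − ⟨y, ∇f(x)⟩ 1_{B₁(0)}(y)) ν(x, dy). Assume there exist constants R > r ≥ 0 such that: (i) for every nonempty open set O ⊆ B_R(0) ∖ B̄_r(0) and every nonempty compact set K ⊂ ℝ^d, inf_{x∈K} ν(x, O) > 0; (ii) for every nonnegative lower semicontinuous function f : ℝ^d → ℝ, the map x ↦ ∫_{ℝ^d} f(y + x) ν(x, dy) (with values in [0,∞]) is lower semicontinuous. Then for every t > 0, every x ∈ ℝ^d and every nonempty open set O ⊆ ℝ^d, P_t(x, O) > 0.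 -/

import Mathlib

open MeasureTheory ProbabilityTheory Set
open scoped ENNReal RealInnerProductSpace

/-!
Call `z` accessible from `x` if, for every neighbourhood `O` of `z`, all sufficiently small times
`t` and all starting points `y` near `x` satisfy `P_t(y, O) > 0`. If `f ≥ 0` is a test function
supported in `O` that vanishes near `x`, then near `x` the generator only sees the jumps,
`L f(y) = ∫ f(y + w) ν(y, dw)`, and `P_t f(y) ≥ t (L f(y) - ε)`; hence `x + v` is accessible from
`x` as soon as `v` is a jump direction charged locally uniformly near `x`. Accessibility is
transitive by the Chapman-Kolmogorov equation and closed in its endpoint, and the annulus generates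
`ℝ^d` as an additive monoid, so every point is accessible from every other one. Finally, a fixed
time `t` is split as `(t - s) + s`: with `y` in the support of `P_t(x, ·)`, strong continuity keeps
mass near `y` at time `t - s` for small `s`, and from there any open set is charged in time `s`.
-/

open Filter Function
open scoped Topology

section Kernel

variable {α β γ : Type*} [MeasurableSpace α] [MeasurableSpace β] [MeasurableSpace γ]

lemma kernel_comp_apply_pos {κ : Kernel α β} {η : Kernel β γ} {a : α} {U : Set β} {O : Set γ}
    (hO : MeasurableSet O) (hU : 0 < κ a U) (h : ∀ y ∈ U, 0 < η y O) : 0 < (η ∘ₖ κ) a O := by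
  rw [Kernel.comp_apply' _ _ _ hO, lintegral_pos_iff_support (η.measurable_coe hO)]
  exact hU.trans_le (measure_mono fun y hy => (h y hy).ne')

lemma eq_kernel_comp_of_integral_eq {κ : Kernel α β} {η : Kernel β γ} {ξ : Kernel α γ}
    [IsFiniteKernel κ] [IsFiniteKernel η] [IsFiniteKernel ξ]
    (h : ∀ f : γ → ℝ, Measurable f → (∃ M, ∀ z, |f z| ≤ M) →
      ∀ a, ∫ z, f z ∂ξ a = ∫ y, (∫ z, f z ∂η y) ∂κ a) :
    ξ = η ∘ₖ κ := by
  ext a s hs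
  have hs_bound : ∀ z, |s.indicator (1 : γ → ℝ) z| ≤ 1 := fun z => by
    by_cases hz : z ∈ s <;> simp [hz]
  have hs_integral := h _ (measurable_one.indicator hs) ⟨1, hs_bound⟩ a
  rw [← Kernel.integral_comp ((integrable_const 1).indicator hs), integral_indicator_one hs,
    integral_indicator_one hs] at hs_integral
  exact (measureReal_eq_measureReal_iff).1 hs_integral

end Kernel

section Measure

lemma measure_pos_of_integral_pos {α : Type*} [MeasurableSpace α] {μ : Measure α} {f : α → ℝ}
    {O : Set α} (hfO : support f ⊆ O) (h : 0 < ∫ y, f y ∂μ) : 0 < μ O := by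
  refine pos_iff_ne_zero.2 fun hO => h.ne' (integral_eq_zero_of_ae ?_)
  exact measure_mono_null hfO hO

variable {E : Type*} [NormedAddCommGroup E] [MeasurableSpace E] {μ : Measure E}

lemma measure_compl_lt_top_of_lintegral_min_one_sq [OpensMeasurableSpace E]
    (hμ : ∫⁻ y, ENNReal.ofReal (min 1 (‖y‖ ^ 2)) ∂μ < ∞) {U : Set E} (hU : U ∈ 𝓝 0) :
    μ Uᶜ < ∞ := by
  obtain ⟨ε, hε, hεU⟩ := Metric.mem_nhds_iff.1 hU
  have hsubset : Uᶜ ⊆ {y | ENNReal.ofReal (min 1 (ε ^ 2)) ≤ ENNReal.ofReal (min 1 (‖y‖ ^ 2))} :=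
    fun y hy => by
      have hεy : ε ≤ ‖y‖ := not_lt.1 fun hlt => hy (hεU (mem_ball_zero_iff.2 hlt))
      simp only [mem_ofPred_eq]
      gcongr
  have hmarkov := meas_ge_le_lintegral_div (μ := μ) (ε := ENNReal.ofReal (min 1 (ε ^ 2)))
    (f := fun y => ENNReal.ofReal (min 1 (‖y‖ ^ 2))) (by fun_prop)
    (by simp [hε.ne']) ENNReal.ofReal_ne_top
  exact (measure_mono hsubset).trans_lt
    (hmarkov.trans_lt (ENNReal.div_lt_top hμ.ne (by simp [hε.ne'])))

lemma integrable_of_bound_of_eventuallyEq_zero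
    (hμ : ∀ U ∈ 𝓝 (0 : E), μ Uᶜ < ∞) {g : E → ℝ} (hg : AEStronglyMeasurable g μ)
    {M : ℝ} (hgM : ∀ y, |g y| ≤ M) (hg0 : g =ᶠ[𝓝 0] 0) : Integrable g μ := by
  rw [← integrableOn_iff_integrable_of_support_subset subset_rfl]
  exact IntegrableOn.of_bound (hμ _ hg0) hg.restrict M (ae_of_all _ hgM)

end Measure

section Generator

variable {E : Type*} [MeasurableSpace E] {P : ℝ → Kernel E E} {f g : E → ℝ} {M : ℝ}

/-- The Chapman-Kolmogorov equation of a semigroup of kernels. Only positive times are involved, so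
that `P t` is unconstrained for `t ≤ 0`. -/
def IsKernelSemigroup (P : ℝ → Kernel E E) : Prop :=
  ∀ ⦃s t : ℝ⦄, 0 < s → 0 < t → P (t + s) = P s ∘ₖ P t

/-- `f` belongs to the domain of the generator of `P` in the supremum norm, with image `g`:
`t⁻¹ (P_t f - f) → g` uniformly as `t → 0+`. -/
def HasUniformGenerator (P : ℝ → Kernel E E) (f g : E → ℝ) : Prop :=
  TendstoUniformly (fun t x => ((∫ y, f y ∂P t x) - f x) / t) g (𝓝[>] 0)

lemma hasUniformGenerator_of_abs_sub_le
    (h : ∀ ε : ℝ, 0 < ε → ∃ δ > 0, ∀ t : ℝ, 0 < t → t < δ → ∀ x,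
      |((∫ y, f y ∂P t x) - f x) / t - g x| ≤ ε) :
    HasUniformGenerator P f g := by
  refine Metric.tendstoUniformly_iff.2 fun ε hε => ?_
  obtain ⟨δ, hδ, hδε⟩ := h (ε / 2) (half_pos hε)
  filter_upwards [Ioo_mem_nhdsGT hδ] with t ht x
  rw [dist_comm, Real.dist_eq]
  exact (hδε t ht.1 ht.2 x).trans_lt (half_lt_self hε)

variable [∀ t, IsMarkovKernel (P t)]

lemma abs_integral_kernel_le (hfM : ∀ x, |f x| ≤ M) (t : ℝ) (x : E) :
    |∫ y, f y ∂P t x| ≤ M := by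
  simpa using norm_integral_le_of_norm_le_const (μ := P t x) (f := f) (ae_of_all _ hfM)

lemma HasUniformGenerator.exists_abs_le (h : HasUniformGenerator P f g) (hfM : ∀ x, |f x| ≤ M) :
    ∃ C, ∀ x, |g x| ≤ C := by
  obtain ⟨t, ht, ht0 : 0 < t⟩ :=
    ((Metric.tendstoUniformly_iff.1 h 1 one_pos).and self_mem_nhdsWithin).exists
  refine ⟨1 + (M + M) / t, fun x => ?_⟩
  set q := ((∫ y, f y ∂P t x) - f x) / t
  have hq : |q| ≤ (M + M) / t := by
    rw [abs_div, abs_of_pos ht0]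
    gcongr
    exact (abs_sub _ _).trans (add_le_add (abs_integral_kernel_le hfM t x) (hfM x))
  have hgap : |g x - q| < 1 := ht x
  linarith [abs_sub_abs_le_abs_sub (g x) q]

lemma HasUniformGenerator.tendstoUniformly_integral (h : HasUniformGenerator P f g)
    (hfM : ∀ x, |f x| ≤ M) :
    TendstoUniformly (fun t x => ∫ y, f y ∂P t x) f (𝓝[>] 0) := by
  obtain ⟨C, hC⟩ := h.exists_abs_le hfM
  refine Metric.tendstoUniformly_iff.2 fun ε hε => ?_
  have hsmall : ∀ᶠ t : ℝ in 𝓝[>] 0, t * (C + 1) < ε :=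
    (((continuous_id.mul continuous_const).tendsto' 0 0 (by simp)).mono_left
      nhdsWithin_le_nhds).eventually_lt_const hε
  filter_upwards [Metric.tendstoUniformly_iff.1 h 1 one_pos, self_mem_nhdsWithin, hsmall]
    with t ht (ht0 : 0 < t) htε x
  have hquot : |((∫ y, f y ∂P t x) - f x) / t| ≤ C + 1 := by
    have hgap := ht x
    rw [dist_comm, Real.dist_eq] at hgap
    linarith [abs_sub_abs_le_abs_sub (((∫ y, f y ∂P t x) - f x) / t) (g x), hC x]
  rw [abs_div, abs_of_pos ht0, div_le_iff₀' ht0] at hquot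
  rw [dist_comm, Real.dist_eq]
  exact hquot.trans_lt htε

lemma IsKernelSemigroup.tendsto_integral_sub (hP : IsKernelSemigroup P)
    (hcont : TendstoUniformly (fun t x => ∫ y, f y ∂P t x) f (𝓝[>] 0))
    (hf : Measurable f) (hfM : ∀ x, |f x| ≤ M) {t : ℝ} (ht : 0 < t) (x : E) :
    Tendsto (fun s => ∫ y, f y ∂P (t - s) x) (𝓝[>] 0) (𝓝 (∫ y, f y ∂P t x)) := by
  have hint : ∀ (μ : Measure E) [IsFiniteMeasure μ], Integrable f μ := fun μ _ =>
    .of_bound hf.aestronglyMeasurable M (ae_of_all _ hfM)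
  have hint_kernel : ∀ s r, Integrable (fun y => ∫ z, f z ∂P s y) (P r x) := fun s r =>
    .of_bound (hf.stronglyMeasurable.integral_kernel (κ := P s)).aestronglyMeasurable M
      (ae_of_all _ fun y => abs_integral_kernel_le hfM s y)
  refine Metric.tendsto_nhds.2 fun ε hε => ?_
  filter_upwards [Metric.tendstoUniformly_iff.1 hcont (ε / 2) (half_pos hε), Ioo_mem_nhdsGT ht]
    with s hs hst
  have hCK : ∫ y, f y ∂P t x = ∫ y, ∫ z, f z ∂P s y ∂P (t - s) x := by
    rw [← Kernel.integral_comp (hint _), ← hP hst.1 (sub_pos.2 hst.2), sub_add_cancel]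
  rw [hCK, Real.dist_eq, ← integral_sub (hint _) (hint_kernel _ _)]
  exact (abs_integral_kernel_le (fun y => (hs y).le) _ x).trans_lt (half_lt_self hε)

end Generator

section Accessible

variable {E : Type*} [TopologicalSpace E] [MeasurableSpace E] {P : ℝ → Kernel E E} {x y z : E}

/-- `z` can be reached from `x` in arbitrarily small times, locally uniformly in the starting
point: every neighbourhood of `z` is charged by `P t x'` for all `x'` close to `x` and all small
`t > 0`. -/
def AccessibleInSmallTime (P : ℝ → Kernel E E) (x z : E) : Prop :=
  ∀ O ∈ 𝓝 z, ∀ᶠ p : E × ℝ in 𝓝 x ×ˢ 𝓝[>] 0, 0 < P p.2 p.1 O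

lemma AccessibleInSmallTime.trans [OpensMeasurableSpace E] (hP : IsKernelSemigroup P)
    (hxy : AccessibleInSmallTime P x y) (hyz : AccessibleInSmallTime P y z) :
    AccessibleInSmallTime P x z := by
  intro O hO
  obtain ⟨near, hnear, small, hsmall, hpos⟩ :=
    eventually_prod_iff.1 (hyz (interior O) (interior_mem_nhds.2 hO))
  have hhalf : Tendsto (fun t : ℝ => t / 2) (𝓝[>] 0) (𝓝[>] 0) :=
    tendsto_nhdsWithin_iff.2 ⟨((continuous_id.div_const 2).tendsto' 0 0 (by simp)).mono_left
      nhdsWithin_le_nhds, eventually_mem_nhdsWithin.mono fun t ht => half_pos (mem_Ioi.1 ht)⟩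
  filter_upwards [(tendsto_id.prodMap hhalf).eventually (hxy {w | near w} hnear),
    tendsto_snd.eventually (hhalf.eventually hsmall), tendsto_snd.eventually self_mem_nhdsWithin]
    with p hp hp_small hp_pos
  have ht : 0 < p.2 / 2 := half_pos (mem_Ioi.1 hp_pos)
  rw [← add_halves p.2, hP ht ht]
  exact (kernel_comp_apply_pos isOpen_interior.measurableSet hp
    fun w hw => hpos hw hp_small).trans_le (measure_mono interior_subset)

lemma isClosed_setOf_accessibleInSmallTime (P : ℝ → Kernel E E) (x : E) :
    IsClosed {z | AccessibleInSmallTime P x z} :=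
  isClosed_iff_frequently.2 fun _ hz O hO =>
    let ⟨_, hw, hwO⟩ := (hz.and_eventually (eventually_mem_nhds_iff.2 hO)).exists
    hw O hwO

lemma accessibleInSmallTime_of_exists_generator_pos
    (h : ∀ O ∈ 𝓝 z, ∃ (f g : E → ℝ) (c : ℝ), HasUniformGenerator P f g ∧ support f ⊆ O ∧
      0 < c ∧ ∀ᶠ y in 𝓝 x, 0 ≤ f y ∧ c ≤ g y) :
    AccessibleInSmallTime P x z := by
  intro O hO
  obtain ⟨f, g, c, hgen, hfO, hc, hnear⟩ := h O hO
  filter_upwards [hnear.prod_mk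
    ((Metric.tendstoUniformly_iff.1 hgen c hc).and self_mem_nhdsWithin)]
    with p ⟨⟨hf, hg⟩, hp, (ht : 0 < p.2)⟩
  have hquot : 0 < ((∫ y, f y ∂P p.2 p.1) - f p.1) / p.2 := by
    linarith [(abs_lt.1 (hp p.1)).2]
  have hincrease := sub_pos.1 ((div_pos_iff_of_pos_right ht).1 hquot)
  exact measure_pos_of_integral_pos hfO (hf.trans_lt hincrease)

lemma accessibleInSmallTime_self_of_exists_tendstoUniformly
    (h : ∀ O ∈ 𝓝 x, ∃ f : E → ℝ, TendstoUniformly (fun t x => ∫ y, f y ∂P t x) f (𝓝[>] 0) ∧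
      support f ⊆ O ∧ ContinuousAt f x ∧ 0 < f x) :
    AccessibleInSmallTime P x x := by
  intro O hO
  obtain ⟨f, hunif, hfO, hcont, hfx⟩ := h O hO
  filter_upwards [(hcont.eventually_const_lt (half_lt_self hfx)).prod_mk
    (Metric.tendstoUniformly_iff.1 hunif (f x / 2) (half_pos hfx))] with p ⟨hf, hp⟩
  exact measure_pos_of_integral_pos hfO (by linarith [(abs_lt.1 (hp p.1)).2])

end Accessible

section NormedSpace

lemma addSubmonoid_eq_top_of_mem_nhds_zero {E : Type*} [AddCommGroup E] [Module ℝ E]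
    [TopologicalSpace E] [ContinuousSMul ℝ E] {S : AddSubmonoid E} (hS : (S : Set E) ∈ 𝓝 0) :
    S = ⊤ := by
  refine (AddSubmonoid.eq_top_iff' S).2 fun x => ?_
  have hlim : Tendsto (fun n : ℕ => ((n : ℝ) + 1)⁻¹ • x) atTop (𝓝 0) := by
    simpa using (tendsto_one_div_add_atTop_nhds_zero_nat (𝕜 := ℝ)).smul_const x
  obtain ⟨n, hn⟩ := (hlim.eventually hS).exists
  have hx : (n + 1) • ((n : ℝ) + 1)⁻¹ • x = x := by
    rw [← Nat.cast_smul_eq_nsmul ℝ, smul_smul, Nat.cast_succ,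
      mul_inv_cancel₀ n.cast_add_one_ne_zero, one_smul]
  exact hx ▸ S.nsmul_mem hn (n + 1)

variable {E : Type*} [NormedAddCommGroup E] [NormedSpace ℝ E]

lemma addSubmonoid_closure_annulus_eq_top {r R : ℝ} (hr : 0 ≤ r) (hrR : r < R) :
    AddSubmonoid.closure (Metric.ball (0 : E) R \ Metric.closedBall 0 r) = ⊤ := by
  refine addSubmonoid_eq_top_of_mem_nhds_zero ?_
  rcases subsingleton_or_nontrivial E with _ | _
  · exact mem_of_superset univ_mem fun u _ => Subsingleton.elim 0 u ▸ zero_mem _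
  obtain ⟨w, hw⟩ := exists_norm_eq E (c := (r + R) / 2) (by linarith)
  refine mem_of_superset (Metric.ball_mem_nhds 0 (half_pos (sub_pos.2 hrR))) fun u hu => ?_
  have hu' : ‖u‖ < (R - r) / 2 := mem_ball_zero_iff.1 hu
  have hlower := norm_sub_le_norm_add w u
  have hupper := norm_add_le w u
  rw [SetLike.mem_coe, show u = w + u + -w by abel]
  refine add_mem (AddSubmonoid.subset_closure ?_) (AddSubmonoid.subset_closure ?_) <;>
    simp only [Set.mem_sdiff, mem_ball_zero_iff, mem_closedBall_zero_iff, norm_neg, not_le] <;>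
    constructor <;> linarith

lemma exists_contDiff_bump_of_mem_nhds [FiniteDimensional ℝ E] {x : E} {O : Set E}
    (hO : O ∈ 𝓝 x) :
    ∃ f : E → ℝ, ContDiff ℝ (⊤ : ℕ∞) f ∧ HasCompactSupport f ∧ tsupport f ⊆ O ∧ 0 ≤ f ∧
      (∀ y, |f y| ≤ 1) ∧ 0 < f x := by
  obtain ⟨f, hfO, hf_compact, hf, hf_range, hfx⟩ := exists_contDiff_tsupport_subset (n := ⊤) hO
  have hf_Icc : ∀ y, f y ∈ Icc (0 : ℝ) 1 := fun y => hf_range (mem_range_self y)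
  exact ⟨f, hf, hf_compact, hfO, fun y => (hf_Icc y).1,
    fun y => (abs_of_nonneg (hf_Icc y).1).trans_le (hf_Icc y).2, hfx ▸ one_pos⟩

end NormedSpace

section LocallyUniformJump

/-- Every neighbourhood of the jump `v` has, at all points near `x`, intensity at least some
`m > 0`. -/
def IsLocallyUniformJump {E : Type*} [TopologicalSpace E] [MeasurableSpace E]
    (ν : E → Measure E) (x v : E) : Prop :=
  ∀ V ∈ 𝓝 v, ∃ m : ℝ≥0∞, 0 < m ∧ ∀ᶠ y in 𝓝 x, m ≤ ν y V

lemma isLocallyUniformJump_of_forall_isCompact {E : Type*} [TopologicalSpace E]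
    [WeaklyLocallyCompactSpace E] [MeasurableSpace E] {ν : E → Measure E} {A : Set E}
    (hA : IsOpen A)
    (h : ∀ O ⊆ A, IsOpen O → O.Nonempty → ∀ K : Set E, IsCompact K → K.Nonempty →
      ∃ m : ℝ≥0∞, 0 < m ∧ ∀ x ∈ K, m ≤ ν x O) :
    ∀ x, ∀ v ∈ A, IsLocallyUniformJump ν x v := by
  intro x v hv V hV
  obtain ⟨K, hK, hKx⟩ := exists_compact_mem_nhds x
  obtain ⟨m, hm, hmK⟩ := h (interior V ∩ A) inter_subset_right (isOpen_interior.inter hA)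
    ⟨v, mem_interior_iff_mem_nhds.2 hV, hv⟩ K hK ⟨x, mem_of_mem_nhds hKx⟩
  exact ⟨m, hm, mem_of_superset hKx fun y hy =>
    (hmK y hy).trans (measure_mono (inter_subset_left.trans interior_subset))⟩

lemma IsLocallyUniformJump.exists_pos_le_integral {E : Type*} [NormedAddCommGroup E]
    [MeasurableSpace E] [OpensMeasurableSpace E] {ν : E → Measure E} {x v : E}
    (hν : ∀ y, ∀ U ∈ 𝓝 (0 : E), ν y Uᶜ < ∞) (h : IsLocallyUniformJump ν x v) {f : E → ℝ}
    (hf : Continuous f) {M : ℝ} (hfM : ∀ y, |f y| ≤ M) (hf_nonneg : 0 ≤ f)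
    (hf_zero : f =ᶠ[𝓝 x] 0) (hfv : 0 < f (x + v)) :
    ∃ c > 0, ∀ᶠ y in 𝓝 x, c ≤ ∫ w, f (y + w) ∂ν y := by
  set a := f (x + v) / 2
  have ha : 0 < a := half_pos hfv
  have hnear : ∀ᶠ p in 𝓝 x ×ˢ 𝓝 v, a < f (p.1 + p.2) := by
    rw [← nhds_prod_eq]
    exact (hf.comp continuous_add).continuousAt.eventually_const_lt (half_lt_self hfv)
  obtain ⟨near, hnear_x, jump, hjump_v, hlarge⟩ := eventually_prod_iff.1 hnear
  obtain ⟨m, hm, hmν⟩ := h {w | jump w} hjump_v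
  have hshift : ∀ᶠ y in 𝓝 x, Integrable (fun w => f (y + w)) (ν y) ∧
      m ≤ ν y {w | a ≤ f (y + w)} := by
    filter_upwards [hmν, hnear_x, eventually_eventually_nhds.2 hf_zero] with y hy hy_near hy_zero
    have hshift_zero : (fun w => f (y + w)) =ᶠ[𝓝 0] 0 :=
      ((continuous_const_add y).tendsto' 0 y (add_zero y)).eventually hy_zero
    exact ⟨integrable_of_bound_of_eventuallyEq_zero (hν y)
      (hf.comp (continuous_const_add y)).aestronglyMeasurable (fun w => hfM _) hshift_zero,
      hy.trans (measure_mono fun w hw => (hlarge hy_near hw).le)⟩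
  have hm_top : m ≠ ∞ := by
    obtain ⟨hint, hle⟩ := hshift.self_of_nhds
    exact (hle.trans_lt (hint.measure_ge_lt_top ha)).ne
  refine ⟨a * m.toReal, mul_pos ha (ENNReal.toReal_pos hm.ne' hm_top), ?_⟩
  filter_upwards [hshift] with y ⟨hint, hle⟩
  calc a * m.toReal ≤ a * (ν y).real {w | a ≤ f (y + w)} := by
        gcongr
        exact ENNReal.toReal_mono (hint.measure_ge_lt_top ha).ne hle
    _ ≤ ∫ w, f (y + w) ∂ν y :=
        mul_meas_ge_le_integral_of_nonneg (μ := ν y) (f := fun w => f (y + w))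
          (ae_of_all _ fun w => hf_nonneg (y + w)) hint a

end LocallyUniformJump

section JumpKernel

variable {E : Type*} [NormedAddCommGroup E] [NormedSpace ℝ E] [MeasurableSpace E]
  {P : ℝ → Kernel E E} {L : (E → ℝ) → E → ℝ} {ν : E → Measure E} {x v : E}

/-- On every test function `f ∈ C_c^∞`, the operator `L` is the generator of `P` in the supremum
norm. -/
def IsGeneratorOnTestFunctions (P : ℝ → Kernel E E) (L : (E → ℝ) → E → ℝ) : Prop :=
  ∀ ⦃f : E → ℝ⦄, ContDiff ℝ (⊤ : ℕ∞) f → HasCompactSupport f → HasUniformGenerator P f (L f)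

/-- `ν` describes the nonlocal part of `L`: at a point `x` near which the test function `f`
vanishes, `L f x` is the integral of `f` over the jumps from `x`. -/
def IsJumpKernel (L : (E → ℝ) → E → ℝ) (ν : E → Measure E) : Prop :=
  ∀ ⦃f : E → ℝ⦄ ⦃x : E⦄, ContDiff ℝ (⊤ : ℕ∞) f → HasCompactSupport f → f =ᶠ[𝓝 x] 0 →
    L f x = ∫ w, f (x + w) ∂ν x

variable [FiniteDimensional ℝ E]

lemma IsLocallyUniformJump.accessibleInSmallTime [OpensMeasurableSpace E]
    (hL : IsGeneratorOnTestFunctions P L) (hLν : IsJumpKernel L ν)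
    (hν : ∀ y, ∀ U ∈ 𝓝 (0 : E), ν y Uᶜ < ∞) (h : IsLocallyUniformJump ν x v) (hv : v ≠ 0) :
    AccessibleInSmallTime P x (x + v) := by
  refine accessibleInSmallTime_of_exists_generator_pos fun O hO => ?_
  have hO_punctured : O ∩ {x}ᶜ ∈ 𝓝 (x + v) :=
    inter_mem hO (isOpen_compl_singleton.mem_nhds (by simpa using hv))
  obtain ⟨f, hf, hf_compact, hfO, hf_nonneg, hf_bound, hfv⟩ :=
    exists_contDiff_bump_of_mem_nhds hO_punctured
  have hf_zero : f =ᶠ[𝓝 x] 0 :=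
    notMem_tsupport_iff_eventuallyEq.1 fun hx => (hfO hx).2 rfl
  obtain ⟨c, hc, hc_le⟩ :=
    h.exists_pos_le_integral hν hf.continuous hf_bound hf_nonneg hf_zero hfv
  refine ⟨f, L f, c, hL hf hf_compact,
    (subset_tsupport f).trans (hfO.trans inter_subset_left), hc, ?_⟩
  filter_upwards [hc_le, eventually_eventually_nhds.2 hf_zero] with y hy hy_zero
  exact ⟨hf_nonneg y, (hLν hf hf_compact hy_zero).symm ▸ hy⟩

variable [∀ t, IsMarkovKernel (P t)]

lemma IsGeneratorOnTestFunctions.accessibleInSmallTime_self (hL : IsGeneratorOnTestFunctions P L)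
    (x : E) : AccessibleInSmallTime P x x :=
  accessibleInSmallTime_self_of_exists_tendstoUniformly fun _ hO =>
    let ⟨f, hf, hf_compact, hfO, _, hf_bound, hfx⟩ := exists_contDiff_bump_of_mem_nhds hO
    ⟨f, (hL hf hf_compact).tendstoUniformly_integral hf_bound, (subset_tsupport f).trans hfO,
      hf.continuous.continuousAt, hfx⟩

lemma accessibleInSmallTime_of_dense_closure [OpensMeasurableSpace E] (hP : IsKernelSemigroup P)
    (hL : IsGeneratorOnTestFunctions P L) (hLν : IsJumpKernel L ν)
    (hν : ∀ y, ∀ U ∈ 𝓝 (0 : E), ν y Uᶜ < ∞) {S : Set E}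
    (hS : Dense (AddSubmonoid.closure S : Set E))
    (hjump : ∀ x, ∀ v ∈ S, IsLocallyUniformJump ν x v) (x z : E) :
    AccessibleInSmallTime P x z := by
  have hclosure : ∀ v ∈ AddSubmonoid.closure S, ∀ x, AccessibleInSmallTime P x (x + v) := by
    intro v hv
    induction hv using AddSubmonoid.closure_induction with
    | mem v hv =>
      intro x
      rcases eq_or_ne v 0 with rfl | hv0
      · simpa using hL.accessibleInSmallTime_self x
      · exact (hjump x v hv).accessibleInSmallTime hL hLν hν hv0
    | zero => simpa using hL.accessibleInSmallTime_self
    | add v w _ _ ihv ihw => exact fun x => add_assoc x v w ▸ (ihv x).trans hP (ihw (x + v))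
  have hclosed : IsClosed {w | AccessibleInSmallTime P x (x + w)} :=
    (isClosed_setOf_accessibleInSmallTime P x).preimage (continuous_const_add x)
  have hall : ∀ w, AccessibleInSmallTime P x (x + w) :=
    hS.induction (fun w hw => hclosure w hw x) hclosed
  simpa using hall (z - x)

lemma IsGeneratorOnTestFunctions.exists_eventually_pos_sub [OpensMeasurableSpace E]
    (hL : IsGeneratorOnTestFunctions P L) (hP : IsKernelSemigroup P) {t : ℝ} (ht : 0 < t) (x : E) :
    ∃ y, ∀ U ∈ 𝓝 y, ∀ᶠ s in 𝓝[>] 0, 0 < P (t - s) x U := by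
  obtain ⟨y, -, hy⟩ := exists_mem_forall_mem_nhdsWithin_pos_measure (μ := P t x) (s := univ)
    (by simp)
  refine ⟨y, fun U hU => ?_⟩
  obtain ⟨f, hf, hf_compact, hfU, hf_nonneg, hf_bound, hfy⟩ := exists_contDiff_bump_of_mem_nhds hU
  have hpos : 0 < ∫ w, f w ∂P t x := by
    refine (integral_pos_iff_support_of_nonneg hf_nonneg
      (.of_bound hf.continuous.aestronglyMeasurable 1 (ae_of_all _ hf_bound))).2 (hy _ ?_)
    rw [nhdsWithin_univ]
    exact hf.continuous.isOpen_support.mem_nhds hfy.ne'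
  filter_upwards [(hP.tendsto_integral_sub ((hL hf hf_compact).tendstoUniformly_integral hf_bound)
    hf.continuous.measurable hf_bound ht x).eventually_const_lt hpos] with s hs
  exact measure_pos_of_integral_pos ((subset_tsupport f).trans hfU) hs

theorem open_set_irreducibility_of_levy_type_semigroup_general [OpensMeasurableSpace E]
    (hP : IsKernelSemigroup P) (hL : IsGeneratorOnTestFunctions P L) (hLν : IsJumpKernel L ν)
    (hν : ∀ y, ∀ U ∈ 𝓝 (0 : E), ν y Uᶜ < ∞) {S : Set E}
    (hS : Dense (AddSubmonoid.closure S : Set E))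
    (hjump : ∀ x, ∀ v ∈ S, IsLocallyUniformJump ν x v) :
    ∀ t : ℝ, 0 < t → ∀ x, ∀ O : Set E, IsOpen O → O.Nonempty → 0 < P t x O := by
  rintro t ht x O hO ⟨z, hz⟩
  obtain ⟨y, hy⟩ := hL.exists_eventually_pos_sub hP ht x
  obtain ⟨near, hnear, small, hsmall, hpos⟩ := eventually_prod_iff.1
    (accessibleInSmallTime_of_dense_closure hP hL hLν hν hS hjump y z O (hO.mem_nhds hz))
  obtain ⟨s, hs_near, hs_small, hs, hst⟩ :=
    ((hy {w | near w} hnear).and (hsmall.and (Ioo_mem_nhdsGT ht))).exists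
  rw [← sub_add_cancel t s, hP hs (sub_pos.2 hst)]
  exact kernel_comp_apply_pos hO.measurableSet hs_near fun w hw => hpos hw hs_small

end JumpKernel

section LevyGenerator

variable {ι : Type*} [Fintype ι] [DecidableEq ι]

/-- The integro-differential operator with drift `b`, diffusion matrix `c` and Lévy kernel `ν`. The
Hessian is `iteratedFDeriv ℝ 2 f x`, contracted with `c x` in the standard basis. -/
noncomputable def levyGenerator (b : EuclideanSpace ℝ ι → EuclideanSpace ℝ ι)
    (c : EuclideanSpace ℝ ι → Matrix ι ι ℝ) (ν : EuclideanSpace ℝ ι → Measure (EuclideanSpace ℝ ι))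
    (f : EuclideanSpace ℝ ι → ℝ) (x : EuclideanSpace ℝ ι) : ℝ :=
  ⟪b x, gradient f x⟫ +
    (1 / 2) * ∑ i, ∑ j, c x i j *
      iteratedFDeriv ℝ 2 f x ![EuclideanSpace.single i (1 : ℝ), EuclideanSpace.single j (1 : ℝ)] +
    ∫ y, (f (x + y) - f x -
      (Metric.ball (0 : EuclideanSpace ℝ ι) 1).indicator (fun z => ⟪z, gradient f x⟫) y) ∂ν x

lemma isJumpKernel_levyGenerator (b : EuclideanSpace ℝ ι → EuclideanSpace ℝ ι)
    (c : EuclideanSpace ℝ ι → Matrix ι ι ℝ)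
    (ν : EuclideanSpace ℝ ι → Measure (EuclideanSpace ℝ ι)) :
    IsJumpKernel (levyGenerator b c ν) ν := by
  intro f x _ _ hfx
  have hgrad : gradient f x = 0 := hfx.gradient_eq.trans (gradient_fun_const x 0)
  have hhess : iteratedFDeriv ℝ 2 f x = 0 := by
    rw [(hfx.iteratedFDeriv ℝ 2).eq_of_nhds, iteratedFDeriv_zero]
    rfl
  simp [levyGenerator, hgrad, hhess, hfx.eq_of_nhds]

end LevyGenerator

/-- A Lévy-type Markov semigroup whose generator on `C_c^∞` is the
integro-differential operator with triplet `(b, c, ν)`, where the Lévy kernel `ν` has enough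
jump activity in an annulus (uniformly on compacts) and satisfies a lower semicontinuity
condition, is open-set irreducible: `P_t(x, O) > 0` for all `t > 0`, `x` and nonempty open
`O`. -/
theorem open_set_irreducibility_of_levy_type_semigroup
    (d : ℕ)
    (P : ℝ → Kernel (EuclideanSpace ℝ (Fin d)) (EuclideanSpace ℝ (Fin d)))
    [∀ t, IsMarkovKernel (P t)]
    (hP0 : ∀ x, P 0 x = Measure.dirac x)
    (hCK : ∀ s t : ℝ, 0 ≤ s → 0 ≤ t → ∀ f : EuclideanSpace ℝ (Fin d) → ℝ,
      Measurable f → (∃ M, ∀ y, |f y| ≤ M) →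
      ∀ x, ∫ y, f y ∂(P (t + s) x) = ∫ y, (∫ z, f z ∂(P s y)) ∂(P t x))
    -- the Lévy triplet
    (b : EuclideanSpace ℝ (Fin d) → EuclideanSpace ℝ (Fin d)) (hb : Measurable b)
    (c : EuclideanSpace ℝ (Fin d) → Matrix (Fin d) (Fin d) ℝ)
    (hc : ∀ i j, Measurable fun x => c x i j)
    (hcsymm : ∀ x, (c x).IsSymm) (hcpos : ∀ x, (c x).PosSemidef)
    (ν : Kernel (EuclideanSpace ℝ (Fin d)) (EuclideanSpace ℝ (Fin d)))
    (hνsf : ∀ x, SigmaFinite (ν x))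
    (hν0 : ∀ x, ν x ({0} : Set (EuclideanSpace ℝ (Fin d))) = 0)
    (hν2 : ∀ x, ∫⁻ y, ENNReal.ofReal (min 1 (‖y‖ ^ 2)) ∂(ν x) < ∞)
    -- the generator on `C_c^∞` is the pseudo-differential operator with triplet `(b,c,ν)`:
    -- `sup_x |t⁻¹(P_t f(x) − f(x)) − L f(x)| → 0` as `t → 0+`
    (hgen : ∀ f : EuclideanSpace ℝ (Fin d) → ℝ, ContDiff ℝ (⊤ : ℕ∞) f → HasCompactSupport f →
      ∀ ε : ℝ, 0 < ε → ∃ δ > 0, ∀ t : ℝ, 0 < t → t < δ → ∀ x,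
        |((∫ y, f y ∂(P t x)) - f x) / t -
          (⟪b x, gradient f x⟫ +
            (1 / 2) * ∑ i : Fin d, ∑ j : Fin d, c x i j *
              iteratedFDeriv ℝ 2 f x
                ![EuclideanSpace.single i (1:ℝ), EuclideanSpace.single j (1:ℝ)] +
            ∫ y, (f (x + y) - f x -
              (Metric.ball (0 : EuclideanSpace ℝ (Fin d)) 1).indicator
                (fun z => ⟪z, gradient f x⟫) y) ∂(ν x))| ≤ ε)
    -- (i): uniform jump activity in the annulus `B_R(0) ∖ B̄_r(0)` over compact sets
    (R r : ℝ) (hr : 0 ≤ r) (hrR : r < R)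
    (hi : ∀ O : Set (EuclideanSpace ℝ (Fin d)),
      O ⊆ Metric.ball (0 : EuclideanSpace ℝ (Fin d)) R \
        Metric.closedBall (0 : EuclideanSpace ℝ (Fin d)) r →
      IsOpen O → O.Nonempty →
      ∀ K : Set (EuclideanSpace ℝ (Fin d)), IsCompact K → K.Nonempty →
        ∃ m : ℝ≥0∞, 0 < m ∧ ∀ x ∈ K, m ≤ ν x O)
    -- (ii): lower semicontinuity of `x ↦ ∫ f(y+x) ν(x,dy)`
    (hii : ∀ f : EuclideanSpace ℝ (Fin d) → ℝ, (∀ x, 0 ≤ f x) →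
      LowerSemicontinuous f →
      LowerSemicontinuous fun x => ∫⁻ y, ENNReal.ofReal (f (y + x)) ∂(ν x)) :
    ∀ t : ℝ, 0 < t → ∀ x, ∀ O : Set (EuclideanSpace ℝ (Fin d)),
      IsOpen O → O.Nonempty → 0 < P t x O := by
  exact open_set_irreducibility_of_levy_type_semigroup_general
    (fun s t hs ht => eq_kernel_comp_of_integral_eq (hCK s t hs.le ht.le))
    (L := levyGenerator b c ν)
    (fun f hf hf_compact => hasUniformGenerator_of_abs_sub_le (hgen f hf hf_compact))
    (isJumpKernel_levyGenerator b c ν)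
    (fun x _ hU => measure_compl_lt_top_of_lintegral_min_one_sq (hν2 x) hU)
    (S := Metric.ball 0 R \ Metric.closedBall 0 r)
    (by simp [addSubmonoid_closure_annulus_eq_top hr hrR])
    (isLocallyUniformJump_of_forall_isCompact
      (Metric.isOpen_ball.sdiff Metric.isClosed_closedBall) hi)
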